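/- arXiv:1011.3491 — 6 statements merged into one kernel-verified Lean document; each statement's English description precedes it below -/
import Mathlib

section
/- Let P, x, y, z be lists over a linearly ordered type. If P is a prefix of x, P is a prefix of z, x ≤lex y, and y ≤lex z, then P is a prefix of y. (Strings lexicographically between two strings sharing a common prefix P also have prefix P.) -/
/-!
Passing to a prefix preserves being lexicographically smaller, so `P` lies strictly below `y`
unless `y = x`. If `y` lies strictly below an extension `z` of `P`, then the first difference
between `y` and `z` occurs either after `P`, so that `P` is a prefix of `y`, or within `P`, so that
`y` lies strictly below `P`; asymmetry rules out the latter.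
-/

section

variable {α : Type*} {r : α → α → Prop} {P x y z : List α}

theorem lex_of_prefix_of_lex (hPx : P <+: x) (hxy : List.Lex r x y) : List.Lex r P y := by
  induction hxy generalizing P with
  | nil =>
    obtain rfl := List.prefix_nil.mp hPx
    exact .nil
  | cons _ ih =>
    obtain rfl | ⟨Q, rfl, hQ⟩ := List.prefix_cons_iff.mp hPx
    · exact .nil
    · exact .cons (ih hQ)
  | rel hab =>
    obtain rfl | ⟨Q, rfl, -⟩ := List.prefix_cons_iff.mp hPx
    · exact .nil
    · exact .rel hab

theorem prefix_or_lex_of_lex_of_prefix (hyz : List.Lex r y z) (hPz : P <+: z) :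
    P <+: y ∨ List.Lex r y P := by
  induction hyz generalizing P with
  | nil =>
    obtain rfl | ⟨Q, rfl, -⟩ := List.prefix_cons_iff.mp hPz
    · exact .inl List.nil_prefix
    · exact .inr .nil
  | cons _ ih =>
    obtain rfl | ⟨Q, rfl, hQ⟩ := List.prefix_cons_iff.mp hPz
    · exact .inl List.nil_prefix
    · exact (ih hQ).imp (List.prefix_cons_inj _).mpr .cons
  | rel hab =>
    obtain rfl | ⟨Q, rfl, -⟩ := List.prefix_cons_iff.mp hPz
    · exact .inl List.nil_prefix
    · exact .inr (.rel hab)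

theorem prefix_of_lex_between_general [Std.Asymm r] (hPx : P <+: x) (hPz : P <+: z)
    (hxy : List.Lex r x y ∨ x = y) (hyz : List.Lex r y z ∨ y = z) : P <+: y := by
  obtain hxy | rfl := hxy
  · obtain hyz | rfl := hyz
    · have hPy : List.Lex r P y := lex_of_prefix_of_lex hPx hxy
      exact (prefix_or_lex_of_lex_of_prefix hyz hPz).resolve_right (asymm hPy)
    · exact hPz
  · exact hPx

end

/-- Strings lexicographically between two strings sharing a common prefix `P`
also have prefix `P`. -/
theorem prefix_of_lex_between {α : Type*} [LinearOrder α] (P x y z : List α)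
    (hPx : P <+: x) (hPz : P <+: z)
    (hxy : List.Lex (· < ·) x y ∨ x = y)
    (hyz : List.Lex (· < ·) y z ∨ y = z) :
    P <+: y :=
  prefix_of_lex_between_general hPx hPz hxy hyz
end

section
/- Let σ be a suffix array of a list T and let P be any list (pattern). Then the rank set of P is an interval of ranks: for all i ≤ j ≤ k in Fin |T|, if P is a prefix of T.drop (σ i) and P is a prefix of T.drop (σ k), then P is a prefix of T.drop (σ j). (Every pattern corresponds to a contiguous interval of the suffix array / BWT.) -/
/-!
A list lying strictly between two lists that share the prefix `P` cannot deviate from `P`: at the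
first deviation its letter would be both greater and smaller than the corresponding letter of `P`.
Hence the lists with prefix `P` form an order-convex set, and so does their preimage under the
increasing map sending a rank to its suffix.
-/

section LexPrefix

variable {α : Type*} {r : α → α → Prop} [Std.Asymm r]

theorem exists_eq_cons_of_lex_of_lex {a : α} {x y z : List α}
    (hxy : List.Lex r (a :: x) y) (hyz : List.Lex r y (a :: z)) :
    ∃ y', y = a :: y' ∧ List.Lex r x y' ∧ List.Lex r y' z := by
  cases hxy with
  | cons hxy' => exact ⟨_, rfl, hxy', List.lex_cons_iff.mp hyz⟩
  | rel hab =>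
    cases hyz with
    | cons => exact absurd hab (irrefl_of r a)
    | rel hba => exact absurd hba (asymm_of r hab)

theorem isPrefix_of_lex_of_lex {P x y z : List α} (hx : P <+: x) (hz : P <+: z)
    (hxy : List.Lex r x y) (hyz : List.Lex r y z) : P <+: y := by
  obtain ⟨x', rfl⟩ := hx
  obtain ⟨z', rfl⟩ := hz
  induction P generalizing y with
  | nil => exact List.nil_prefix
  | cons p P ih =>
    obtain ⟨y', rfl, hxy', hyz'⟩ := exists_eq_cons_of_lex_of_lex hxy hyz
    exact (List.prefix_cons_inj p).mpr (ih hxy' hyz')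

theorem rank_set_is_interval_general {ι : Type*} [PartialOrder ι] {s : ι → List α}
    (hs : ∀ i j, i < j → List.Lex r (s i) (s j)) (P : List α) :
    {i | P <+: s i}.OrdConnected := by
  refine Set.ordConnected_def.mpr fun i hi k hk j ⟨hij, hjk⟩ ↦ ?_
  rcases hij.eq_or_lt with rfl | hij
  · exact hi
  rcases hjk.eq_or_lt with rfl | hjk
  · exact hk
  exact isPrefix_of_lex_of_lex hi hk (hs i j hij) (hs j k hjk)

end LexPrefix

/-- The rank set of a pattern `P` in a suffix array is an interval of ranks:
every pattern corresponds to a contiguous interval of the suffix array. -/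
theorem rank_set_is_interval {α : Type*} [LinearOrder α] (T : List α)
    (σ : Fin T.length → Fin T.length) (hbij : Function.Bijective σ)
    (hmono : ∀ i j : Fin T.length, i < j →
      List.Lex (· < ·) (T.drop (σ i)) (T.drop (σ j)))
    (P : List α) :
    ∀ i j k : Fin T.length, i ≤ j → j ≤ k →
      P <+: T.drop (σ i) → P <+: T.drop (σ k) → P <+: T.drop (σ j) :=
  fun _ _ _ hij hjk hi hk ↦ (rank_set_is_interval_general hmono P).out hi hk ⟨hij, hjk⟩
end

section
/- Let σ be a suffix array of a list T, let P be a pattern whose rank set A (as a finset of Fin |T|) is nonempty (with proof h). Then A equals the closed interval Finset.Icc (A.min' h) (A.max' h); in particular the number of suffixes of T having P as a prefix equals A.max' h − A.min' h + 1. (Counting occurrences of P amounts to subtracting the interval endpoints and adding 1.) -/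
/-! If two words share the prefix `P`, then so does every word lexicographically between them:
comparing letters along `P`, the first letter to differ would have to lie both above and below the
corresponding letter of `P`. Hence, in any sorted family of words, the indices of those with
prefix `P` form an order-convex set, and a nonempty order-convex finite set is an interval. -/

section Prefix

variable {α : Type*} {r : α → α → Prop} [Std.Asymm r]

theorem ordConnected_setOf_isPrefix {ι : Type*} [PartialOrder ι] {f : ι → List α}
    (hf : ∀ i j, i < j → Relation.ReflGen (List.Lex r) (f i) (f j)) (P : List α) :
    {i | P <+: f i}.OrdConnected := by
  refine Set.ordConnected_of_Ioo fun i (hi : P <+: f i) k (hk : P <+: f k) _ j ⟨hij, hjk⟩ => ?_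
  change P <+: f j
  obtain heq | hlex_ij := (Relation.reflGen_iff _ _ _).1 (hf i j hij)
  · rwa [heq]
  obtain heq | hlex_jk := (Relation.reflGen_iff _ _ _).1 (hf j k hjk)
  · rwa [← heq]
  exact isPrefix_of_lex_of_lex hi hk hlex_ij hlex_jk

end Prefix

theorem finset_eq_Icc_of_ordConnected {ι : Type*} [LinearOrder ι] [LocallyFiniteOrder ι]
    {A : Finset ι} (hA : (A : Set ι).OrdConnected) (h : A.Nonempty) :
    A = Finset.Icc (A.min' h) (A.max' h) := by
  refine subset_antisymm (fun i hi => Finset.mem_Icc.2 ⟨A.min'_le i hi, A.le_max' i hi⟩) ?_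
  rw [← Finset.coe_subset, Finset.coe_Icc]
  exact hA.out (A.min'_mem h) (A.max'_mem h)

theorem rank_set_eq_Icc_general {α : Type*} {r : α → α → Prop} [Std.Asymm r] {n : ℕ}
    {f : Fin n → List α}
    (hf : ∀ i j, i < j → Relation.ReflGen (List.Lex r) (f i) (f j))
    {P : List α} {A : Finset (Fin n)} (hA : ∀ i, i ∈ A ↔ P <+: f i) (h : A.Nonempty) :
    A = Finset.Icc (A.min' h) (A.max' h) ∧
      A.card = (A.max' h : ℕ) - (A.min' h : ℕ) + 1 := by
  have coe_eq : (A : Set (Fin n)) = {i | P <+: f i} := Set.ext hA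
  have eq_Icc := finset_eq_Icc_of_ordConnected
    (coe_eq ▸ ordConnected_setOf_isPrefix hf P) h
  refine ⟨eq_Icc, ?_⟩
  calc A.card = (Finset.Icc (A.min' h) (A.max' h)).card := congrArg Finset.card eq_Icc
    _ = (A.max' h : ℕ) + 1 - (A.min' h : ℕ) := Fin.card_Icc _ _
    _ = (A.max' h : ℕ) - (A.min' h : ℕ) + 1 := Nat.sub_add_comm (A.min'_le_max' h)

/-- The rank set `A` of a pattern `P`, if nonempty, is the closed interval
between its minimum and maximum; in particular the number of suffixes of `T`
having `P` as a prefix equals `A.max' h - A.min' h + 1`. -/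
theorem rank_set_eq_Icc {α : Type*} [LinearOrder α] (T : List α)
    (σ : Fin T.length → Fin T.length) (hbij : Function.Bijective σ)
    (hmono : ∀ i j : Fin T.length, i < j →
      List.Lex (· < ·) (T.drop (σ i)) (T.drop (σ j)))
    (P : List α) (A : Finset (Fin T.length))
    (hA : ∀ i : Fin T.length, i ∈ A ↔ P <+: T.drop (σ i))
    (h : A.Nonempty) :
    A = Finset.Icc (A.min' h) (A.max' h) ∧
      A.card = (A.max' h : ℕ) - (A.min' h : ℕ) + 1 :=
  rank_set_eq_Icc_general (fun i j hij => .single (hmono i j hij)) hA h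
end

section
/- Let T be a list over a linearly ordered type and P1, P2 lists. Suppose P1 is a prefix of T.drop j and T.drop (j + |P1|) <lex P2. Then T.drop j <lex P1 ++ P2, and moreover T.drop j <lex T.drop k for every position k such that P1 ++ P2 is a prefix of T.drop k. (The 'left arrow' case: a suffix starting with P1 whose displaced continuation is lexicographically below P2 lies strictly before every suffix starting with P1P2.) -/
section PrefixLex

variable {α : Type*} {r : α → α → Prop} {l p q : List α}

theorem lex_of_lex_of_prefix (hlex : List.Lex r l p) (hpre : p <+: q) : List.Lex r l q := by
  obtain ⟨t, rfl⟩ := hpre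
  exact List.Lex.append_right r t hlex

theorem lex_append_of_prefix_of_lex_drop (hpre : p <+: l)
    (hlex : List.Lex r (l.drop p.length) q) : List.Lex r l (p ++ q) := by
  rw [List.prefix_append_drop hpre]
  exact List.Lex.append_left r hlex p

theorem left_arrow_case_general (T P1 P2 : List α) (j : ℕ) (hpre : P1 <+: T.drop j)
    (hlex : List.Lex r (T.drop (j + P1.length)) P2) :
    List.Lex r (T.drop j) (P1 ++ P2) ∧
      ∀ k : ℕ, P1 ++ P2 <+: T.drop k → List.Lex r (T.drop j) (T.drop k) := by
  have hdisplaced : List.Lex r ((T.drop j).drop P1.length) P2 := by rwa [List.drop_drop]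
  have hbelow : List.Lex r (T.drop j) (P1 ++ P2) :=
    lex_append_of_prefix_of_lex_drop hpre hdisplaced
  exact ⟨hbelow, fun _ hk => lex_of_lex_of_prefix hbelow hk⟩

end PrefixLex

/-- The "left arrow" case: a suffix starting with `P1` whose displaced
continuation is lexicographically below `P2` lies strictly before every suffix
starting with `P1 ++ P2`. -/
theorem left_arrow_case {α : Type*} [LinearOrder α] (T P1 P2 : List α) (j : ℕ)
    (hpre : P1 <+: T.drop j)
    (hlt : List.Lex (· < ·) (T.drop (j + P1.length)) P2) :
    List.Lex (· < ·) (T.drop j) (P1 ++ P2) ∧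
      ∀ k : ℕ, P1 ++ P2 <+: T.drop k →
        List.Lex (· < ·) (T.drop j) (T.drop k) :=
  left_arrow_case_general T P1 P2 j hpre hlt
end

section
/- Let T be a list over a linearly ordered type and P1, P2 lists. Suppose P1 is a prefix of T.drop j, P2 <lex T.drop (j + |P1|), and P2 is not a prefix of T.drop (j + |P1|). Then T.drop k <lex T.drop j for every position k such that P1 ++ P2 is a prefix of T.drop k. (The 'right arrow' case: a suffix starting with P1 whose displaced continuation is lexicographically strictly above P2, and does not begin with P2, lies strictly after every suffix starting with P1P2.) -/
/-! If `P2` is below a list without being a prefix of it, the comparison is decided at a mismatch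
inside `P2`, so it survives any extension of `P2`; a common prefix `P1` can then be put in front of
both sides. -/

theorem lex_append_of_lex_of_not_isPrefix {α : Type*} {r : α → α → Prop} {P X : List α}
    (hlex : List.Lex r P X) (hP : ¬ P <+: X) (S : List α) : List.Lex r (P ++ S) X := by
  induction hlex with
  | nil => exact absurd List.nil_prefix hP
  | rel hab => exact .rel hab
  | cons _ ih => exact .cons (ih fun h => hP (List.cons_prefix_cons.2 ⟨rfl, h⟩))

theorem right_arrow_case_general {α : Type*} {r : α → α → Prop} {P1 P2 X Y : List α}
    (hX : P1 <+: X) (hlex : List.Lex r P2 (X.drop P1.length))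
    (hP2 : ¬ P2 <+: X.drop P1.length) (hY : P1 ++ P2 <+: Y) : List.Lex r Y X := by
  obtain ⟨X', rfl⟩ := hX
  obtain ⟨S, rfl⟩ := hY
  rw [List.drop_left] at hlex hP2
  rw [List.append_assoc]
  exact (lex_append_of_lex_of_not_isPrefix hlex hP2 S).append_left r P1

/-- The "right arrow" case: a suffix starting with `P1` whose displaced
continuation is lexicographically strictly above `P2`, and does not begin with
`P2`, lies strictly after every suffix starting with `P1 ++ P2`. -/
theorem right_arrow_case {α : Type*} [LinearOrder α] (T P1 P2 : List α) (j : ℕ)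
    (hpre : P1 <+: T.drop j)
    (hlt : List.Lex (· < ·) P2 (T.drop (j + P1.length)))
    (hnpre : ¬ P2 <+: T.drop (j + P1.length)) :
    ∀ k : ℕ, P1 ++ P2 <+: T.drop k →
      List.Lex (· < ·) (T.drop k) (T.drop j) := by
  rw [← List.drop_drop] at hlt hnpre
  exact fun _ => right_arrow_case_general hpre hlt hnpre
end

section
/- Let P 0, …, P (t-1) be nonempty lists over a type α and let S = P 0 ++ ⋯ ++ P (t-1). If S has an LZ parse consisting of z phrases, then S has an LZ parse consisting of at most z + t phrases in which every pattern boundary is a phrase boundary: for each k ≤ t, the prefix P 0 ++ ⋯ ++ P (k-1) of S equals the concatenation of some initial segment of the phrase list. (Parsing the patterns P 0, …, P (t-1) one by one, while allowing matches to cross the boundaries of previously seen patterns, produces at most t more phrases than parsing their concatenation as a single string.) -/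
/-- A phrase `f` is LZ-valid relative to an already-parsed prefix `Q` if it is
a single character or a factor (contiguous substring) of `Q`. -/
def LZValid {α : Type*} (f Q : List α) : Prop :=
  f.length = 1 ∨ f <:+: Q

/-- An LZ parse of `S` is a list of nonempty phrases whose concatenation is `S`
and in which every phrase is LZ-valid relative to the concatenation of the
phrases preceding it. -/
def IsLZParse {α : Type*} (phrases : List (List α)) (S : List α) : Prop :=
  phrases.flatten = S ∧
    ∀ pre ph suf, phrases = pre ++ ph :: suf →
      ph ≠ [] ∧ LZValid ph pre.flatten

/-!
Validity of a phrase passes to its nonempty factors and to longer contexts, so cutting a phrase of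
an LZ parse in two at any interior position leaves an LZ parse. Each prefix of `S` that is not yet
a phrase boundary therefore becomes one at the cost of a single cut, and cutting preserves the
existing boundaries.
-/

section

variable {α : Type*}

namespace LZValid

variable {f g Q R : List α}

theorem of_isInfix (h : LZValid f Q) (hgf : g <:+: f) (hg : g ≠ []) : LZValid g Q := by
  rcases h with hlen | hfac
  · have := hgf.length_le
    have := List.length_pos_iff.2 hg
    exact Or.inl (by omega)
  · exact Or.inr (hgf.trans hfac)

theorem mono (h : LZValid f Q) (hQR : Q <:+: R) : LZValid f R :=
  h.imp_right fun hfac => hfac.trans hQR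

end LZValid

/-- `LZValidFrom Q ps` says that the phrases `ps` may continue an LZ parse whose phrases so far
concatenate to `Q`. It is recursive in `ps`, so that the validity condition of `IsLZParse` can be
established phrase by phrase. -/
def LZValidFrom : List α → List (List α) → Prop
  | _, [] => True
  | Q, f :: fs => (f ≠ [] ∧ LZValid f Q) ∧ LZValidFrom (Q ++ f) fs

theorem lzValidFrom_iff_forall_split {Q : List α} {ps : List (List α)} :
    LZValidFrom Q ps ↔ ∀ pre ph suf, ps = pre ++ ph :: suf →
      ph ≠ [] ∧ LZValid ph (Q ++ pre.flatten) := by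
  induction ps generalizing Q with
  | nil => simp [LZValidFrom]
  | cons f fs ih =>
    rw [LZValidFrom, ih]
    constructor
    · rintro ⟨hf, hfs⟩ (_ | ⟨g, pre⟩) ph suf hsplit
      · obtain ⟨rfl, rfl⟩ := List.cons.inj hsplit
        simpa using hf
      · obtain ⟨rfl, rfl⟩ := List.cons.inj hsplit
        simpa using hfs pre ph suf rfl
    · intro h
      exact ⟨by simpa using h [] f fs rfl,
        fun pre ph suf hsplit => by simpa using h (f :: pre) ph suf (by simp [hsplit])⟩

theorem isLZParse_iff_lzValidFrom {ps : List (List α)} {S : List α} :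
    IsLZParse ps S ↔ ps.flatten = S ∧ LZValidFrom [] ps := by
  simp only [IsLZParse, lzValidFrom_iff_forall_split, List.nil_append]

theorem lzValidFrom_append {Q : List α} {as bs : List (List α)} :
    LZValidFrom Q (as ++ bs) ↔ LZValidFrom Q as ∧ LZValidFrom (Q ++ as.flatten) bs := by
  induction as generalizing Q with
  | nil => simp [LZValidFrom]
  | cons f fs ih => simp [LZValidFrom, ih, and_assoc]

theorem LZValidFrom.cut_head {Q b c : List α} {ds : List (List α)}
    (h : LZValidFrom Q ((b ++ c) :: ds)) (hb : b ≠ []) (hc : c ≠ []) :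
    LZValidFrom Q (b :: c :: ds) := by
  obtain ⟨⟨-, hbc⟩, hds⟩ := h
  have hb_valid : LZValid b Q := hbc.of_isInfix (List.prefix_append b c).isInfix hb
  have hc_valid : LZValid c Q := hbc.of_isInfix (List.suffix_append b c).isInfix hc
  exact ⟨⟨hb, hb_valid⟩, ⟨hc, hc_valid.mono (List.prefix_append Q b).isInfix⟩,
    by rwa [List.append_assoc]⟩

theorem IsLZParse.cut {as ds : List (List α)} {b c S : List α}
    (h : IsLZParse (as ++ (b ++ c) :: ds) S) (hb : b ≠ []) (hc : c ≠ []) :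
    IsLZParse (as ++ b :: c :: ds) S := by
  rw [isLZParse_iff_lzValidFrom, lzValidFrom_append] at h ⊢
  obtain ⟨hflat, has, hbc⟩ := h
  exact ⟨by simpa using hflat, has, hbc.cut_head hb hc⟩

/-- The phrase boundaries of a list of phrases. A boundary is encoded by the text to its left,
that is, by the concatenation of an initial segment of the list. -/
def phraseBoundaries (ps : List (List α)) : Set (List α) :=
  List.flatten '' {as | as <+: ps}

theorem nil_mem_phraseBoundaries (ps : List (List α)) : [] ∈ phraseBoundaries ps :=
  ⟨[], List.nil_prefix, rfl⟩

theorem exists_take_flatten_eq_of_mem_phraseBoundaries {ps : List (List α)} {Q : List α}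
    (h : Q ∈ phraseBoundaries ps) : ∃ i ≤ ps.length, (ps.take i).flatten = Q := by
  obtain ⟨as, has, rfl⟩ := h
  exact ⟨as.length, has.length_le, by rw [← List.prefix_iff_eq_take.1 has]⟩

theorem phraseBoundaries_cons (f : List α) (fs : List (List α)) :
    phraseBoundaries (f :: fs) = insert [] ((f ++ ·) '' phraseBoundaries fs) := by
  ext Q
  simp [phraseBoundaries, List.prefix_cons_iff, or_and_right, exists_or, eq_comm]

theorem phraseBoundaries_cut (as : List (List α)) (b c : List α) (ds : List (List α)) :
    phraseBoundaries (as ++ b :: c :: ds) =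
      insert (as.flatten ++ b) (phraseBoundaries (as ++ (b ++ c) :: ds)) := by
  induction as with
  | nil =>
    simp [phraseBoundaries_cons, Set.image_insert_eq, Set.image_image, Set.insert_comm]
  | cons f fs ih =>
    simp [phraseBoundaries_cons, ih, Set.image_insert_eq, Set.insert_comm]

theorem mem_phraseBoundaries_or_exists_cut {ps : List (List α)} {Q : List α}
    (hQ : Q <+: ps.flatten) :
    Q ∈ phraseBoundaries ps ∨ ∃ as b c ds,
      ps = as ++ (b ++ c) :: ds ∧ b ≠ [] ∧ c ≠ [] ∧ Q = as.flatten ++ b := by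
  obtain ⟨R, hR⟩ := hQ
  rcases List.flatten_eq_append_iff.1 hR.symm with
    ⟨as, ds, rfl, rfl, -⟩ | ⟨as, b, x, c, ds, rfl, rfl, -⟩
  · exact Or.inl ⟨as, List.prefix_append as ds, rfl⟩
  · rcases eq_or_ne b [] with rfl | hb
    · exact Or.inl ⟨as, List.prefix_append as _, (List.append_nil _).symm⟩
    · exact Or.inr ⟨as, b, x :: c, ds, rfl, hb, List.cons_ne_nil x c, rfl⟩

theorem IsLZParse.exists_insert_boundary {ps : List (List α)} {S Q : List α}
    (h : IsLZParse ps S) (hQ : Q <+: S) :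
    ∃ ps', IsLZParse ps' S ∧ ps'.length ≤ ps.length + 1 ∧
      insert Q (phraseBoundaries ps) ⊆ phraseBoundaries ps' := by
  rcases mem_phraseBoundaries_or_exists_cut (h.1.symm ▸ hQ) with
    hmem | ⟨as, b, c, ds, rfl, hb, hc, rfl⟩
  · exact ⟨ps, h, Nat.le_succ _, Set.insert_subset hmem Set.Subset.rfl⟩
  · exact ⟨as ++ b :: c :: ds, h.cut hb hc, by simp [Nat.add_assoc],
      (phraseBoundaries_cut as b c ds).superset⟩

theorem IsLZParse.exists_insert_boundaries {ps Qs : List (List α)} {S : List α}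
    (h : IsLZParse ps S) (hQs : ∀ Q ∈ Qs, Q <+: S) :
    ∃ ps', IsLZParse ps' S ∧ ps'.length ≤ ps.length + Qs.length ∧
      ∀ Q ∈ Qs, Q ∈ phraseBoundaries ps' := by
  induction Qs with
  | nil => exact ⟨ps, h, le_rfl, by simp⟩
  | cons Q Qs ih =>
    rw [List.forall_mem_cons] at hQs
    obtain ⟨ps₁, hps₁, hlen₁, hbdry₁⟩ := ih hQs.2
    obtain ⟨ps₂, hps₂, hlen₂, hbdry₂⟩ := hps₁.exists_insert_boundary hQs.1
    rw [Set.insert_subset_iff] at hbdry₂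
    exact ⟨ps₂, hps₂, by rw [List.length_cons]; omega,
      List.forall_mem_cons.2 ⟨hbdry₂.1, fun R hR => hbdry₂.2 (hbdry₁ R hR)⟩⟩

end

/-- Parsing the patterns `P 0, …, P (t-1)` one by one, while allowing matches
to cross the boundaries of previously seen patterns, produces at most `t` more
phrases than parsing their concatenation as a single string: from an LZ parse
of the concatenation `S` with `z` phrases we get an LZ parse of `S` with at
most `z + t` phrases in which every pattern boundary is a phrase boundary. -/
theorem lz_parse_respecting_boundaries {α : Type*} (t : ℕ) (P : Fin t → List α)
    (hP : ∀ h : Fin t, P h ≠ []) (S : List α) (hS : S = (List.ofFn P).flatten)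
    (z : ℕ) (parse : List (List α)) (hparse : IsLZParse parse S)
    (hz : parse.length = z) :
    ∃ parse' : List (List α), IsLZParse parse' S ∧ parse'.length ≤ z + t ∧
      ∀ k ≤ t, ∃ i ≤ parse'.length,
        (parse'.take i).flatten = ((List.ofFn P).take k).flatten := by
  let boundary (k : ℕ) : List α := ((List.ofFn P).take k).flatten
  have boundary_prefix (k : ℕ) : boundary k <+: S :=
    hS ▸ (List.take_prefix k (List.ofFn P)).flatten
  obtain ⟨parse', hparse', hlen, hbdry⟩ :=
    hparse.exists_insert_boundaries (Qs := (List.range t).map fun k => boundary (k + 1))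
      (by simp [boundary_prefix])
  refine ⟨parse', hparse', by simpa [hz] using hlen, fun k hk => ?_⟩
  apply exists_take_flatten_eq_of_mem_phraseBoundaries
  cases k with
  | zero => exact nil_mem_phraseBoundaries parse'
  | succ k => exact hbdry _ (List.mem_map_of_mem (List.mem_range.2 hk))
end
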